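/- For every nonnegative integer j, every nonnegative integer n, and each t ∈ {22, 28}, b^2_{2,5}(2·5^{2j+2}·n + (t·5^{2j+1} + 1)/3) ≡ 0 (mod 4). -/

import Mathlib

/-- `coloredRegular k l m n` is the number of `k`-colored partitions of `n` into parts
divisible by neither `l` nor `m`, i.e. the coefficient of `q^n` in
`∏_{j ≥ 1, l ∤ j, m ∤ j} (1 - q^j)^{-k}`.  A `k`-colored partition is a multiset of
(part, color) pairs, where parts are positive integers not divisible by `l` or `m`
and colors range over `{0, …, k-1}`. -/
noncomputable def coloredRegular (k l m n : ℕ) : ℕ :=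
  Nat.card {M : Multiset (ℕ × ℕ) //
    (∀ x ∈ M, ¬ l ∣ x.1 ∧ ¬ m ∣ x.1 ∧ x.2 < k) ∧ (M.map Prod.fst).sum = n}

/-!
Write `A` for the generating function of the one-colored partitions, so that the claim concerns
`A²`, and `E(q) = ∏ (1 - q ^ j)`. Modulo 2, the product formula gives `A(q) * E(q⁵) = E(q)`, and

* `E(q) * E(q²) = ψ(q)`,
* `E(q) * E(q⁵) = ψ(q²) + q * ψ(q¹⁰)`,

where `ψ(q) = ∑ q ^ (k * (k + 1) / 2)`. By Euler's pentagonal number theorem the coefficient of `qⁿ`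
in `E(q) * E(q ^ p)`, for `p = 2, 5`, has the parity of the number of solutions of
`x² + p * y² = 24 * n + p + 1` with `x`, `y` prime to 6, counted up to the signs of `x` and `y`.
Dividing `x + y√-p` by `1 + √-p` turns these into solutions of `w² + p * v² = M`. If the latter are
counted in a half plane, the involution `x ↦ -x` removes those with `3 ∣ y`, while complex
conjugation leaves only the solutions on the axes, whence the right-hand sides.

It follows that `A(q) = u(q²) + q * v(q²)` with `u * v = ψ(q) * E(q⁵)` modulo 2. The coefficient of
`q ^ (2 * N + 1)` in `A²` is twice the coefficient of `q ^ N` in `u * v`, hence divisible by 4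
unless `3 * x² + 5 * y² = 24 * N + 8` is solvable. For the `N` in question the right-hand side is
`5 ^ (2 * j + 1) * K` with `K ≡ ±2` modulo 5, which descent at 5 rules out.
-/

namespace RegularPartition

open PowerSeries Finset

section ColoredPartitions

variable {k l m : ℕ}

/-- The pairs of total size `n`, sorted by the sizes `f` and `g` of their components. This is the
bijection behind the Cauchy product of two counting sequences. -/
def antidiagonalFiberEquiv {α β : Type*} (f : α → ℕ) (g : β → ℕ) (n : ℕ) :
    {x : α × β // f x.1 + g x.2 = n} ≃
      Σ q : antidiagonal n, {a // f a = q.1.1} × {b // g b = q.1.2} where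
  toFun x :=
    ⟨⟨(f x.1.1, g x.1.2), HasAntidiagonal.mem_antidiagonal.2 x.2⟩, ⟨x.1.1, rfl⟩, ⟨x.1.2, rfl⟩⟩
  invFun y := ⟨(y.2.1.1, y.2.2.1), by
    rw [y.2.1.2, y.2.2.2]
    exact HasAntidiagonal.mem_antidiagonal.1 y.1.2⟩
  left_inv _ := rfl
  right_inv := by
    rintro ⟨⟨⟨i, j⟩, h⟩, ⟨a, ha⟩, ⟨b, hb⟩⟩
    obtain rfl : f a = i := ha
    obtain rfl : g b = j := hb
    rfl

variable (l m) in
/-- Multisets of parts divisible by neither `l` nor `m`. The parts are positive because `l ∣ 0`. -/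
abbrev RegularMultiset := {P : Multiset ℕ // ∀ i ∈ P, ¬ l ∣ i ∧ ¬ m ∣ i}

variable (k l m) in
/-- `k`-colored partitions of arbitrary size into parts divisible by neither `l` nor `m`, as
multisets of pairs (part, color). -/
abbrev ColoredMultiset := {M : Multiset (ℕ × ℕ) // ∀ x ∈ M, ¬ l ∣ x.1 ∧ ¬ m ∣ x.1 ∧ x.2 < k}

/-- Regular multisets with sum `n` are the restricted partitions of `n` in the sense of Mathlib. -/
def RegularMultiset.fiberEquiv (n : ℕ) : {P : RegularMultiset l m // P.1.sum = n} ≃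
    Nat.Partition.restricted n fun i => ¬ l ∣ i ∧ ¬ m ∣ i where
  toFun P := ⟨⟨P.1.1,
      fun {i} hi => Nat.pos_of_ne_zero fun h => (P.1.2 i hi).1 (h ▸ dvd_zero l), P.2⟩,
    mem_filter.2 ⟨mem_univ _, P.1.2⟩⟩
  invFun p := ⟨⟨p.1.parts, (mem_filter.1 p.2).2⟩, p.1.parts_sum⟩
  left_inv _ := rfl
  right_inv _ := rfl

instance (n : ℕ) : Finite {P : RegularMultiset l m // P.1.sum = n} :=
  .of_equiv _ (RegularMultiset.fiberEquiv n).symm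

/-- Separates the parts of color `k`, the last one, from the others. -/
def ColoredMultiset.splitLastColor :
    ColoredMultiset (k + 1) l m ≃ ColoredMultiset k l m × RegularMultiset l m where
  toFun M :=
    (⟨M.1.filter (·.2 < k), fun x hx =>
        have hx := Multiset.mem_filter.1 hx
        ⟨(M.2 x hx.1).1, (M.2 x hx.1).2.1, hx.2⟩⟩,
      ⟨(M.1.filter (¬ ·.2 < k)).map Prod.fst, fun i hi => by
        obtain ⟨x, hx, rfl⟩ := Multiset.mem_map.1 hi
        have hx := M.2 x (Multiset.mem_filter.1 hx).1
        exact ⟨hx.1, hx.2.1⟩⟩)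
  invFun p := ⟨p.1.1 + p.2.1.map (·, k), fun x hx => by
    rcases Multiset.mem_add.1 hx with hx | hx
    · exact ⟨(p.1.2 x hx).1, (p.1.2 x hx).2.1, (p.1.2 x hx).2.2.trans k.lt_succ_self⟩
    · obtain ⟨i, hi, rfl⟩ := Multiset.mem_map.1 hx
      exact ⟨(p.2.2 i hi).1, (p.2.2 i hi).2, k.lt_succ_self⟩⟩
  left_inv M := by
    refine Subtype.ext ?_
    have last : ((M.1.filter (¬ ·.2 < k)).map Prod.fst).map (·, k) = M.1.filter (¬ ·.2 < k) := by
      rw [Multiset.map_map]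
      refine (Multiset.map_congr rfl fun x hx => ?_).trans (Multiset.map_id _)
      have hx := Multiset.mem_filter.1 hx
      exact Prod.ext rfl ((not_lt.1 hx.2).antisymm (Nat.lt_succ_iff.1 (M.2 x hx.1).2.2))
    simp only [last]
    exact Multiset.filter_add_not _ _
  right_inv p := by
    have lt : p.1.1.filter (·.2 < k) = p.1.1 :=
      Multiset.filter_eq_self.2 fun x hx => (p.1.2 x hx).2.2
    refine Prod.ext (Subtype.ext ?_) (Subtype.ext ?_)
    · simp [Multiset.filter_map, lt]
    · simpa [Multiset.filter_map] using fun i c h => (p.1.2 (i, c) h).2.2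

/-- The number that is partitioned: the sum of all parts. -/
def ColoredMultiset.size (M : ColoredMultiset k l m) : ℕ := (M.1.map Prod.fst).sum

lemma ColoredMultiset.size_eq_add (M : ColoredMultiset (k + 1) l m) :
    (splitLastColor M).1.size + (splitLastColor M).2.1.sum = M.size := by
  rw [size, size, splitLastColor, Equiv.coe_fn_mk, ← Multiset.sum_add, ← Multiset.map_add,
    Multiset.filter_add_not]

/-- `splitLastColor` on the colored partitions of `n`, sorted by the sizes of the two pieces. -/
def ColoredMultiset.fiberEquiv (k l m n : ℕ) :
    {M : ColoredMultiset (k + 1) l m // M.size = n} ≃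
    Σ q : antidiagonal n, {M : ColoredMultiset k l m // M.size = q.1.1} ×
      {P : RegularMultiset l m // P.1.sum = q.1.2} :=
  (splitLastColor.subtypeEquiv fun M => by rw [size_eq_add]).trans
    (antidiagonalFiberEquiv ColoredMultiset.size (fun P : RegularMultiset l m => P.1.sum) n)

instance : Unique (ColoredMultiset 0 l m) where
  default := ⟨0, by simp⟩
  uniq M := Subtype.ext (Multiset.eq_zero_of_forall_notMem fun x hx => by simpa using M.2 x hx)

instance ColoredMultiset.finite_fiber (k n : ℕ) :
    Finite {M : ColoredMultiset k l m // M.size = n} := by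
  induction k generalizing n with
  | zero => infer_instance
  | succ k ih => exact .of_equiv _ (fiberEquiv k l m n).symm

lemma coloredRegular_eq_card_fiber (n : ℕ) :
    coloredRegular k l m n = Nat.card {M : ColoredMultiset k l m // M.size = n} :=
  Nat.card_congr (Equiv.subtypeSubtypeEquivSubtypeInter _ _).symm

lemma coloredRegular_zero (l m n : ℕ) : coloredRegular 0 l m n = if n = 0 then 1 else 0 := by
  rw [coloredRegular_eq_card_fiber]
  have (M : ColoredMultiset 0 l m) : M.size = 0 := by rw [Subsingleton.elim M default]; rfl
  simp only [this]
  split_ifs with h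
  · simp [h]
  · simp [Ne.symm h]

lemma coloredRegular_succ (k l m n : ℕ) :
    coloredRegular (k + 1) l m n = ∑ q ∈ antidiagonal n,
      coloredRegular k l m q.1 * #(Nat.Partition.restricted q.2 fun i => ¬ l ∣ i ∧ ¬ m ∣ i) := by
  simp only [coloredRegular_eq_card_fiber, Nat.card_congr (ColoredMultiset.fiberEquiv k l m n),
    Nat.card_sigma, Nat.card_prod, Nat.card_congr (RegularMultiset.fiberEquiv _),
    Nat.card_eq_finsetCard]
  exact sum_coe_sort (antidiagonal n) fun q =>
    Nat.card {M : ColoredMultiset k l m // M.size = q.1} *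
      #(Nat.Partition.restricted q.2 fun i => ¬ l ∣ i ∧ ¬ m ∣ i)

/-- The generating function of the partitions into parts divisible by neither `l` nor `m`. -/
def regularSeries (R : Type*) [Semiring R] (l m : ℕ) : R⟦X⟧ :=
  .mk fun n => (#(Nat.Partition.restricted n fun i => ¬ l ∣ i ∧ ¬ m ∣ i) : R)

theorem coeff_regularSeries_pow (R : Type*) [CommSemiring R] (k l m n : ℕ) :
    coeff n (regularSeries R l m ^ k) = coloredRegular k l m n := by
  induction k generalizing n with
  | zero => simp [coloredRegular_zero, coeff_one]
  | succ k ih =>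
    rw [pow_succ, coeff_mul, coloredRegular_succ, Nat.cast_sum]
    simp only [ih, Nat.cast_mul]
    simp only [regularSeries, coeff_mk]

end ColoredPartitions

section ProductFormula

open scoped PowerSeries.WithPiTopology

variable (R : Type*) [CommRing R]

lemma continuous_expand [TopologicalSpace R] {d : ℕ} (hd : d ≠ 0) :
    Continuous (expand d hd : R⟦X⟧ →ₐ[R] R⟦X⟧) := by
  refine continuous_iff_continuousAt.2 fun f =>
    (WithPiTopology.tendsto_iff_coeff_tendsto R _ _ _).2 fun n => ?_
  simp only [coeff_expand]
  split_ifs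
  · exact (WithPiTopology.continuous_coeff R (n / d)).continuousAt
  · exact tendsto_const_nhds

lemma hasProd_one_sub_X_pow_of_dvd [TopologicalSpace R] {d : ℕ} (hd : d ≠ 0) :
    HasProd (fun i => if d ∣ i + 1 then (1 : R⟦X⟧) - X ^ (i + 1) else 1)
      (expand d hd (pentagonalSeries R)) := by
  have pos (i : ℕ) : 0 < d * (i + 1) := by positivity
  have inj : Function.Injective fun i : ℕ => d * (i + 1) - 1 := by
    intro a b h
    have h : d * (a + 1) = d * (b + 1) := by
      have := pos a
      have := pos b
      simp only at h
      omega
    exact Nat.succ_injective (Nat.mul_left_cancel (Nat.pos_of_ne_zero hd) h)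
  refine (inj.hasProd_iff fun i hi => if_neg ?_).1 ?_
  · rintro ⟨c, hc⟩
    obtain ⟨c, rfl⟩ : ∃ c', c = c' + 1 := Nat.exists_eq_succ_of_ne_zero (by rintro rfl; simp at hc)
    exact hi ⟨c, by simp only; omega⟩
  · convert (WithPiTopology.hasProd_one_sub_X_pow R).map (expand d hd) (continuous_expand R hd)
      using 1
    ext1 i
    simp only [Function.comp_apply, Nat.sub_add_cancel (pos i), dvd_mul_right, if_true, map_sub,
      map_one, map_pow, expand_X, ← pow_mul]

lemma regularSeries_mul_pentagonalSeries_mul_expand {l m : ℕ} (hl : l ≠ 0) (hm : m ≠ 0)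
    (hlm : l.Coprime m) :
    regularSeries R l m * pentagonalSeries R *
        expand (l * m) (mul_ne_zero hl hm) (pentagonalSeries R) =
      expand l hl (pentagonalSeries R) * expand m hm (pentagonalSeries R) := by
  let _ : TopologicalSpace R := ⊥
  have : DiscreteTopology R := ⟨rfl⟩
  have geom (i : ℕ) : (∑' j, (X : R⟦X⟧) ^ ((i + 1) * j)) * (1 - X ^ (i + 1)) = 1 := by
    simp_rw [pow_mul]
    exact WithPiTopology.tsum_pow_mul_one_sub_of_constantCoeff_eq_zero (by simp)
  have factors (i : ℕ) :
      (if ¬ l ∣ i + 1 ∧ ¬ m ∣ i + 1 then ∑' j, (X : R⟦X⟧) ^ ((i + 1) * j) else 1) *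
          (1 - X ^ (i + 1)) * (if l * m ∣ i + 1 then 1 - X ^ (i + 1) else 1) =
        (if l ∣ i + 1 then 1 - X ^ (i + 1) else 1) *
          (if m ∣ i + 1 then 1 - X ^ (i + 1) else 1) := by
    have hdvd : l * m ∣ i + 1 ↔ l ∣ i + 1 ∧ m ∣ i + 1 :=
      ⟨fun h => ⟨dvd_of_mul_right_dvd h, dvd_of_mul_left_dvd h⟩,
        fun h => hlm.mul_dvd_of_dvd_of_dvd h.1 h.2⟩
    by_cases h1 : l ∣ i + 1 <;> by_cases h2 : m ∣ i + 1 <;> simp [h1, h2, hdvd, geom]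
  have lhs := ((Nat.Partition.hasProd_powerSeriesMk_card_restricted R
    fun i => ¬ l ∣ i ∧ ¬ m ∣ i).mul (WithPiTopology.hasProd_one_sub_X_pow R)).mul
      (hasProd_one_sub_X_pow_of_dvd R (mul_ne_zero hl hm))
  rw [funext factors] at lhs
  exact lhs.unique ((hasProd_one_sub_X_pow_of_dvd R hl).mul (hasProd_one_sub_X_pow_of_dvd R hm))

end ProductFormula

section Dissection

/-- The series `u` in the 2-dissection `f = u(q²) + q * v(q²)`. -/
noncomputable def evenPart {R : Type*} [Semiring R] (f : R⟦X⟧) : R⟦X⟧ :=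
  .mk fun n => coeff (2 * n) f

/-- The series `v` in the 2-dissection `f = u(q²) + q * v(q²)`. -/
noncomputable def oddPart {R : Type*} [Semiring R] (f : R⟦X⟧) : R⟦X⟧ :=
  .mk fun n => coeff (2 * n + 1) f

variable {R : Type*} [CommRing R]

lemma coeff_two_mul_expand_add (u v : R⟦X⟧) (n : ℕ) :
    coeff (2 * n) (expand 2 two_ne_zero u + X * expand 2 two_ne_zero v) = coeff n u := by
  rw [map_add, coeff_expand_mul, add_eq_left]
  cases n with
  | zero => exact coeff_zero_X_mul _
  | succ n =>
    rw [Nat.mul_succ, coeff_succ_X_mul, coeff_expand, if_neg (by omega)]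

lemma coeff_two_mul_add_one_expand_add (u v : R⟦X⟧) (n : ℕ) :
    coeff (2 * n + 1) (expand 2 two_ne_zero u + X * expand 2 two_ne_zero v) = coeff n v := by
  rw [map_add, coeff_succ_X_mul, coeff_expand_mul, coeff_expand, if_neg (by omega), zero_add]

lemma expand_evenPart_add (f : R⟦X⟧) :
    expand 2 two_ne_zero (evenPart f) + X * expand 2 two_ne_zero (oddPart f) = f := by
  ext n
  obtain ⟨k, rfl | rfl⟩ := n.even_or_odd'
  · rw [coeff_two_mul_expand_add, evenPart, coeff_mk]
  · rw [coeff_two_mul_add_one_expand_add, oddPart, coeff_mk]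

lemma coeff_two_mul_add_one_sq (f : R⟦X⟧) (n : ℕ) :
    coeff (2 * n + 1) (f ^ 2) = 2 * coeff n (evenPart f * oddPart f) := by
  have : f ^ 2 = expand 2 two_ne_zero (evenPart f ^ 2 + X * oddPart f ^ 2) +
      X * expand 2 two_ne_zero (C 2 * (evenPart f * oddPart f)) := by
    conv_lhs => rw [← expand_evenPart_add f]
    simp only [map_add, map_mul, map_pow, expand_X, map_ofNat]
    ring
  rw [this, coeff_two_mul_add_one_expand_add, coeff_C_mul]

lemma four_dvd_coeff_sq {f : ℤ⟦X⟧} {u v : (ZMod 2)⟦X⟧}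
    (h : map (Int.castRingHom (ZMod 2)) f = expand 2 two_ne_zero u + X * expand 2 two_ne_zero v)
    (n : ℕ) (h0 : coeff n (u * v) = 0) : 4 ∣ coeff (2 * n + 1) (f ^ 2) := by
  have even : map (Int.castRingHom (ZMod 2)) (evenPart f) = u := by
    ext k
    rw [← coeff_two_mul_expand_add u v, ← h, coeff_map, coeff_map, evenPart, coeff_mk]
  have odd : map (Int.castRingHom (ZMod 2)) (oddPart f) = v := by
    ext k
    rw [← coeff_two_mul_add_one_expand_add u v, ← h, coeff_map, coeff_map, oddPart, coeff_mk]
  rw [← even, ← odd, ← map_mul, coeff_map, eq_intCast, ZMod.intCast_zmod_eq_zero_iff_dvd] at h0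
  rw [coeff_two_mul_add_one_sq]
  exact mul_dvd_mul_left 2 h0

end Dissection

section Representations

variable {p M n : ℕ}

lemma natCast_card_eq_natCast_card_fixed {α : Type*} [DecidableEq α] {s : Finset α} {f : α → α}
    (maps : ∀ x ∈ s, f x ∈ s) (invol : ∀ x ∈ s, f (f x) = x) :
    (#s : ZMod 2) = #{x ∈ s | f x = x} := by
  have moved : ((#{x ∈ s | f x ≠ x} : ℕ) : ZMod 2) = 0 := by
    rw [card_eq_sum_ones, Nat.cast_sum]
    refine sum_involution (fun x _ => f x) (fun _ _ => by decide) ?_ ?_ ?_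
    · exact fun x hx _ => (mem_filter.1 hx).2
    · intro x hx
      obtain ⟨hxs, hx⟩ := mem_filter.1 hx
      exact mem_filter.2 ⟨maps x hxs, by rw [invol x hxs]; exact hx.symm⟩
    · exact fun x hx => invol x (mem_filter.1 hx).1
  rw [← card_filter_add_card_filter_not (s := s) (fun x => f x = x), Nat.cast_add, moved, add_zero]

/-- The solutions `z = (w, v)` of `w² + p * v² = M` in the half plane `v < w`; the box
`|w|, |v| ≤ M` only serves to make the set finite. With `x = w + p * v` and `y = w - v`, i.e.
`x + y√-p = (w - v√-p) * (1 + √-p)`, these are solutions of `x² + p * y² = (p + 1) * M` with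
`y > 0`. -/
noncomputable def halfPlaneReps (p M : ℕ) : Finset (ℤ × ℤ) :=
  {z ∈ Icc (-(M : ℤ)) M ×ˢ Icc (-(M : ℤ)) M | z.2 < z.1 ∧ z.1 ^ 2 + p * z.2 ^ 2 = M}

lemma mem_halfPlaneReps (hp : 0 < p) {z : ℤ × ℤ} :
    z ∈ halfPlaneReps p M ↔ z.2 < z.1 ∧ z.1 ^ 2 + p * z.2 ^ 2 = M := by
  simp only [halfPlaneReps, mem_filter, mem_product, mem_Icc, ← abs_le, and_iff_right_iff_imp]
  rintro ⟨-, h⟩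
  have hp' : (1 : ℤ) ≤ p := by exact_mod_cast hp
  have bound (a : ℤ) : |a| ≤ a ^ 2 := by
    rw [← sq_abs, ← Int.natCast_natAbs]; exact_mod_cast Nat.le_self_pow two_ne_zero _
  have h2 : z.2 ^ 2 ≤ p * z.2 ^ 2 := le_mul_of_one_le_left (sq_nonneg _) hp'
  exact ⟨by linarith [bound z.1, sq_nonneg z.2], by linarith [bound z.2, sq_nonneg z.1]⟩

/-- Whichever of `(w, -v)` and `(-w, v)` lies in the half plane `v < w`. -/
def conjRep (z : ℤ × ℤ) : ℤ × ℤ := if -z.2 < z.1 then (z.1, -z.2) else (-z.1, z.2)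

/-- The reflection `(x, y) ↦ (-x, y)` in the coordinates `x = w + p * v`, `y = w - v`, applied only
if `3 ∣ y`; for `p = 2, 5` the division by `p + 1` is then exact. -/
def reflectRep (p : ℕ) (z : ℤ × ℤ) : ℤ × ℤ :=
  if 3 ∣ z.1 - z.2 then
    let v := -((2 * z.1 + (p - 1) * z.2) / (p + 1))
    (z.1 - z.2 + v, v)
  else z

lemma conjRep_eq_self_iff {z : ℤ × ℤ} (h : z.2 < z.1) : conjRep z = z ↔ z.2 = 0 ∨ z.1 = 0 := by
  obtain ⟨w, v⟩ := z
  grind [conjRep]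

lemma isSquare_of_sq_eq {m : ℕ} {x : ℤ} (h : x ^ 2 = m) : IsSquare m :=
  Int.isSquare_natCast_iff.1 ⟨x, by rw [← sq, h]⟩

lemma card_halfPlaneReps_filter_snd_eq_zero (hp : 0 < p) (hM : 0 < M) :
    #{z ∈ halfPlaneReps p M | z.2 = 0} = if IsSquare M then 1 else 0 := by
  split_ifs with h
  · obtain ⟨r, rfl⟩ := h
    refine card_eq_one.2 ⟨(r, 0), ?_⟩
    ext ⟨w, v⟩
    simp only [mem_filter, mem_halfPlaneReps hp, mem_singleton, Prod.mk.injEq]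
    push_cast
    constructor
    · rintro ⟨⟨hlt, h⟩, rfl⟩
      exact ⟨by nlinarith, rfl⟩
    · rintro ⟨rfl, rfl⟩
      exact ⟨⟨by exact_mod_cast pos_of_mul_pos_left hM r.zero_le, by ring⟩, rfl⟩
  · refine card_eq_zero.2 (filter_eq_empty_iff.2 ?_)
    rintro ⟨w, v⟩ hz rfl
    obtain ⟨-, hz⟩ := (mem_halfPlaneReps hp).1 hz
    exact h (isSquare_of_sq_eq (x := w) (by linear_combination hz))

lemma card_halfPlaneReps_filter_fst_eq_zero (hp : 0 < p) (hM : 0 < M)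
    [Decidable (∃ r, M = p * r ^ 2)] :
    #{z ∈ halfPlaneReps p M | z.1 = 0} = if ∃ r, M = p * r ^ 2 then 1 else 0 := by
  split_ifs with h
  · obtain ⟨r, rfl⟩ := h
    refine card_eq_one.2 ⟨(0, -r), ?_⟩
    ext ⟨w, v⟩
    simp only [mem_filter, mem_halfPlaneReps hp, mem_singleton, Prod.mk.injEq]
    push_cast
    constructor
    · rintro ⟨⟨hlt, h⟩, rfl⟩
      have : v ^ 2 = r ^ 2 := by
        have : (p : ℤ) ≠ 0 := by positivity
        exact mul_left_cancel₀ this (by linear_combination h)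
      exact ⟨rfl, by nlinarith⟩
    · rintro ⟨rfl, rfl⟩
      have : r ≠ 0 := by rintro rfl; simp at hM
      exact ⟨⟨by omega, by ring⟩, rfl⟩
  · refine card_eq_zero.2 (filter_eq_empty_iff.2 ?_)
    rintro ⟨w, v⟩ hz rfl
    obtain ⟨-, hz⟩ := (mem_halfPlaneReps hp).1 hz
    refine h ⟨v.natAbs, ?_⟩
    zify
    rw [sq_abs]
    linear_combination -hz

lemma odd_and_odd_of_sq_add_mul_sq (hp : p = 2 ∨ p = 5) {x y : ℤ}
    (h : x ^ 2 + p * y ^ 2 = 24 * n + p + 1) : Odd x ∧ Odd y := by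
  rcases Int.even_or_odd' x with ⟨a, rfl | rfl⟩ <;> rcases Int.even_or_odd' y with ⟨b, rfl | rfl⟩
  case inr.inr => exact ⟨odd_two_mul_add_one a, odd_two_mul_add_one b⟩
  all_goals rcases hp with rfl | rfl <;> push_cast at h <;> ring_nf at h <;> omega

lemma add_mul_sq_add_mul_sub_sq_eq (hM : (p + 1) * M = 24 * n + p + 1) {w v : ℤ}
    (h : w ^ 2 + p * v ^ 2 = M) : (w + p * v) ^ 2 + p * (w - v) ^ 2 = 24 * n + p + 1 := by
  have hM' : ((p : ℤ) + 1) * M = 24 * n + p + 1 := by exact_mod_cast hM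
  linear_combination (p + 1 : ℤ) * h + hM'

lemma add_ne_zero_of_sq_add_mul_sq (hp : p = 2 ∨ p = 5) (hM : (p + 1) * M = 24 * n + p + 1)
    {w v : ℤ} (h : w ^ 2 + p * v ^ 2 = M) : w + v ≠ 0 := by
  have conj := add_mul_sq_add_mul_sub_sq_eq hM (v := -v) (by simpa using h)
  have odd := (odd_and_odd_of_sq_add_mul_sq hp conj).2
  rw [sub_neg_eq_add] at odd
  exact fun h0 => Int.not_odd_zero (h0 ▸ odd)

lemma natCast_card_halfPlaneReps (hp : p = 2 ∨ p = 5) (hM : (p + 1) * M = 24 * n + p + 1)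
    [Decidable (∃ r, M = p * r ^ 2)] :
    (#(halfPlaneReps p M) : ZMod 2) =
      (if IsSquare M then 1 else 0) + if ∃ r, M = p * r ^ 2 then 1 else 0 := by
  have p_pos : 0 < p := by omega
  have M_pos : 0 < M := Nat.pos_of_ne_zero (by rintro rfl; omega)
  have maps (z) (hz : z ∈ halfPlaneReps p M) : conjRep z ∈ halfPlaneReps p M := by
    obtain ⟨w, v⟩ := z
    rw [mem_halfPlaneReps p_pos] at hz ⊢
    have := add_ne_zero_of_sq_add_mul_sq hp hM hz.2
    unfold conjRep
    split_ifs with h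
    · exact ⟨h, by simpa using hz.2⟩
    · exact ⟨show v < -w by omega, by simpa using hz.2⟩
  have invol (z) (hz : z ∈ halfPlaneReps p M) : conjRep (conjRep z) = z := by
    obtain ⟨w, v⟩ := z
    rw [mem_halfPlaneReps p_pos] at hz
    grind [conjRep]
  rw [natCast_card_eq_natCast_card_fixed maps invol,
    filter_congr fun z hz => conjRep_eq_self_iff ((mem_halfPlaneReps p_pos).1 hz).1,
    filter_or, card_union_of_disjoint, Nat.cast_add,
    card_halfPlaneReps_filter_snd_eq_zero p_pos M_pos,
    card_halfPlaneReps_filter_fst_eq_zero p_pos M_pos]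
  · push_cast; rfl
  · refine disjoint_filter.2 ?_
    rintro ⟨w, v⟩ hz rfl rfl
    simp [mem_halfPlaneReps p_pos] at hz

lemma add_one_mul_reflectRep_snd (hp : p = 2 ∨ p = 5) {z : ℤ × ℤ} (h3 : 3 ∣ z.1 - z.2) :
    (p + 1) * (reflectRep p z).2 = -(2 * z.1 + (p - 1) * z.2) := by
  rw [reflectRep, if_pos h3]
  rcases hp with rfl | rfl <;> push_cast <;> omega

lemma reflectRep_sub (p : ℕ) (z : ℤ × ℤ) :
    (reflectRep p z).1 - (reflectRep p z).2 = z.1 - z.2 := by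
  rw [reflectRep]
  split_ifs
  · ring
  · rfl

lemma reflectRep_add (hp : p = 2 ∨ p = 5) {z : ℤ × ℤ} (h3 : 3 ∣ z.1 - z.2) :
    (reflectRep p z).1 + p * (reflectRep p z).2 = -(z.1 + p * z.2) := by
  linear_combination add_one_mul_reflectRep_snd hp h3 + reflectRep_sub p z

lemma eq_of_add_mul_eq_of_sub_eq (p : ℕ) {z z' : ℤ × ℤ} (hx : z.1 + p * z.2 = z'.1 + p * z'.2)
    (hy : z.1 - z.2 = z'.1 - z'.2) : z = z' := by
  have hv : z.2 = z'.2 :=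
    mul_left_cancel₀ (a := (p + 1 : ℤ)) (by positivity) (by linear_combination hx - hy)
  exact Prod.ext (by linear_combination hy + hv) hv

lemma reflectRep_reflectRep (hp : p = 2 ∨ p = 5) (z : ℤ × ℤ) :
    reflectRep p (reflectRep p z) = z := by
  by_cases h3 : 3 ∣ z.1 - z.2
  · have h3' : 3 ∣ (reflectRep p z).1 - (reflectRep p z).2 := by rwa [reflectRep_sub]
    exact eq_of_add_mul_eq_of_sub_eq p
      (by rw [reflectRep_add hp h3', reflectRep_add hp h3, neg_neg])
      (by rw [reflectRep_sub, reflectRep_sub])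
  · simp only [reflectRep, if_neg h3]

lemma reflectRep_mem_halfPlaneReps (hp : p = 2 ∨ p = 5) {z : ℤ × ℤ} (hz : z ∈ halfPlaneReps p M) :
    reflectRep p z ∈ halfPlaneReps p M := by
  by_cases h3 : 3 ∣ z.1 - z.2
  swap
  · rwa [reflectRep, if_neg h3]
  have hy := reflectRep_sub p z
  have hx := reflectRep_add hp h3
  rw [mem_halfPlaneReps (by omega)] at hz ⊢
  refine ⟨by linarith, mul_left_cancel₀ (a := (p + 1 : ℤ)) (by positivity) ?_⟩
  set z' := reflectRep p z
  rw [← hz.2]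
  linear_combination p * (z'.1 - z'.2 + z.1 - z.2) * hy +
    (z'.1 + p * z'.2 - (z.1 + p * z.2)) * hx

lemma reflectRep_eq_self_iff (hp : p = 2 ∨ p = 5) (hM : (p + 1) * M = 24 * n + p + 1)
    {z : ℤ × ℤ} (hz : z.1 ^ 2 + p * z.2 ^ 2 = M) : reflectRep p z = z ↔ ¬ 3 ∣ z.1 - z.2 := by
  refine ⟨fun h h3 => ?_, fun h => if_neg h⟩
  have hx := reflectRep_add hp h3
  rw [h, self_eq_neg] at hx
  have odd := (odd_and_odd_of_sq_add_mul_sq hp (add_mul_sq_add_mul_sub_sq_eq hM hz)).1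
  rw [hx] at odd
  exact Int.not_odd_zero odd

lemma natCast_card_halfPlaneReps_eq_filter_not_dvd (hp : p = 2 ∨ p = 5)
    (hM : (p + 1) * M = 24 * n + p + 1) :
    (#(halfPlaneReps p M) : ZMod 2) = #{z ∈ halfPlaneReps p M | ¬ 3 ∣ z.1 - z.2} := by
  rw [natCast_card_eq_natCast_card_fixed (f := reflectRep p)
      (fun z => reflectRep_mem_halfPlaneReps hp) (fun z _ => reflectRep_reflectRep hp z),
    filter_congr fun z hz =>
      reflectRep_eq_self_iff hp hM ((mem_halfPlaneReps (by omega)).1 hz).2]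

lemma exists_sq_eq_mul_add_one {y : ℤ} (odd : Odd y) (h3 : ¬ 3 ∣ y) :
    ∃ k : ℕ, y ^ 2 = 24 * k + 1 := by
  have h8 : 8 ∣ y ^ 2 - 1 := Int.eight_dvd_sq_sub_one_of_odd odd
  have h3 : 3 ∣ y ^ 2 - 1 := by
    have : y % 3 = 1 ∨ y % 3 = 2 := by omega
    rcases this with h | h <;>
      simp [Int.dvd_iff_emod_eq_zero, Int.sub_emod, pow_two, Int.mul_emod, h]
  have := sq_nonneg y
  exact ⟨(y ^ 2 / 24).toNat, by omega⟩

lemma emod_six_of_sq_emod_six {x : ℤ} (h : x ^ 2 % 6 = 1) : x % 6 = 1 ∨ x % 6 = 5 := by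
  have pos : 0 ≤ x % 6 := Int.emod_nonneg _ (by norm_num)
  have lt : x % 6 < 6 := Int.emod_lt_of_pos _ (by norm_num)
  rw [sq, Int.mul_emod] at h
  generalize x % 6 = s at *
  interval_cases s <;> simp at h ⊢

/-- The exponents `(i, i')` of the pairs of terms that contribute to `qⁿ` in `E(q) * E(q ^ p)`,
a number `k` being pentagonal if and only if `24 * k + 1` is a square. -/
def pentagonalPairs (p n : ℕ) : Finset (ℕ × ℕ) :=
  {q ∈ antidiagonal n | IsSquare (24 * q.1 + 1) ∧ p ∣ q.2 ∧ IsSquare (24 * (q.2 / p) + 1)}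

/-- The solution `z` of `w² + p * v² = M` belongs to the pair of exponents `q`:
`x² = 24 * q.1 + 1` and `p * y² = 24 * q.2 + p` for `x = w + p * v` and `y = w - v`. -/
def Corresponds (p : ℕ) (z : ℤ × ℤ) (q : ℕ × ℕ) : Prop :=
  (z.1 + p * z.2) ^ 2 = 24 * q.1 + 1 ∧ p * (z.1 - z.2) ^ 2 = 24 * q.2 + p

lemma exists_corresponds_of_rep (hp : p = 2 ∨ p = 5) (hM : (p + 1) * M = 24 * n + p + 1)
    {z : ℤ × ℤ} (hz : z.1 ^ 2 + p * z.2 ^ 2 = M) (h3 : ¬ 3 ∣ z.1 - z.2) :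
    ∃ q ∈ pentagonalPairs p n, Corresponds p z q := by
  have p_pos : 0 < p := by omega
  have hxy := add_mul_sq_add_mul_sub_sq_eq hM hz
  obtain ⟨k, hk⟩ := exists_sq_eq_mul_add_one (odd_and_odd_of_sq_add_mul_sq hp hxy).2 h3
  have hx : (z.1 + p * z.2) ^ 2 = 24 * (n - p * k) + 1 := by
    rw [hk] at hxy; linear_combination hxy
  have le : p * k ≤ n := by
    zify
    have := sq_nonneg (z.1 + p * z.2)
    omega
  have hx' : (z.1 + p * z.2) ^ 2 = 24 * (n - p * k : ℕ) + 1 := by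
    rw [hx, Nat.cast_sub le, Nat.cast_mul]
  have hy' : p * (z.1 - z.2) ^ 2 = 24 * (p * k : ℕ) + p := by
    rw [hk, Nat.cast_mul]; ring
  refine ⟨(n - p * k, p * k), ?_, hx', hy'⟩
  simp only [pentagonalPairs, mem_filter, HasAntidiagonal.mem_antidiagonal,
    Nat.mul_div_cancel_left _ p_pos]
  exact ⟨by omega, isSquare_of_sq_eq (by exact_mod_cast hx'), dvd_mul_right _ _,
    isSquare_of_sq_eq (by exact_mod_cast hk)⟩

lemma eq_of_corresponds (hp : p = 2 ∨ p = 5) {z z' : ℤ × ℤ} {q : ℕ × ℕ}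
    (hz : z.2 < z.1) (hz' : z'.2 < z'.1) (h3 : ¬ 3 ∣ z.1 - z.2)
    (h : Corresponds p z q) (h' : Corresponds p z' q) : z = z' := by
  have hy : z.1 - z.2 = z'.1 - z'.2 := by
    refine (sq_eq_sq₀ (by omega) (by omega)).1 ?_
    exact mul_left_cancel₀ (a := (p : ℤ)) (by omega) (h.2.trans h'.2.symm)
  rcases sq_eq_sq_iff_eq_or_eq_neg.1 (h.1.trans h'.1.symm) with hx | hx
  · exact eq_of_add_mul_eq_of_sub_eq p hx hy
  · exact absurd (by rcases hp with rfl | rfl <;> push_cast at hx <;> omega) h3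

lemma exists_rep_of_mem_pentagonalPairs (hp : p = 2 ∨ p = 5) (hM : (p + 1) * M = 24 * n + p + 1)
    {q : ℕ × ℕ} (hq : q ∈ pentagonalPairs p n) :
    ∃ z ∈ halfPlaneReps p M, ¬ 3 ∣ z.1 - z.2 ∧ Corresponds p z q := by
  have p_pos : 0 < p := by omega
  obtain ⟨i, k'⟩ := q
  simp only [pentagonalPairs, mem_filter, HasAntidiagonal.mem_antidiagonal] at hq
  obtain ⟨hn, ⟨a, ha⟩, ⟨k, rfl⟩, ⟨y, hy⟩⟩ := hq
  rw [Nat.mul_div_cancel_left _ p_pos] at hy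
  zify at ha hy hn hM
  have hx6 := emod_six_of_sq_emod_six (x := a) (by rw [sq, ← ha]; omega)
  have hy6 := emod_six_of_sq_emod_six (x := y) (by rw [sq, ← hy]; omega)
  obtain ⟨x, hx, v, hv⟩ : ∃ x : ℤ, x ^ 2 = 24 * i + 1 ∧ (p + 1 : ℤ) ∣ x - y := by
    by_cases h6 : 6 ∣ (a : ℤ) - y
    · exact ⟨a, by linear_combination -ha, by rcases hp with rfl | rfl <;> push_cast <;> omega⟩
    · exact ⟨-a, by linear_combination -ha, by rcases hp with rfl | rfl <;> push_cast <;> omega⟩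
  have hx' : v + y + p * v = x := by linear_combination -hv
  have hrep : (v + y) ^ 2 + p * v ^ 2 = (M : ℤ) := by
    refine mul_left_cancel₀ (a := (p + 1 : ℤ)) (by positivity) ?_
    rw [← hx'] at hx
    linear_combination hx + 24 * hn - p * hy - hM
  have hvy : v + y - v = y := by ring
  have y_pos : 0 < (y : ℤ) := by omega
  exact ⟨(v + y, v), (mem_halfPlaneReps p_pos).2 ⟨by simpa using y_pos, hrep⟩, by rw [hvy]; omega,
    by rw [hx', hx], by rw [hvy]; push_cast; linear_combination -p * hy⟩

lemma card_pentagonalPairs (hp : p = 2 ∨ p = 5) (hM : (p + 1) * M = 24 * n + p + 1) :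
    #(pentagonalPairs p n) = #{z ∈ halfPlaneReps p M | ¬ 3 ∣ z.1 - z.2} := by
  have corresponds (z) (hz : z ∈ ({z ∈ halfPlaneReps p M | ¬ 3 ∣ z.1 - z.2} : Finset (ℤ × ℤ))) :
      (z.2 < z.1 ∧ ¬ 3 ∣ z.1 - z.2) ∧ ∃ q ∈ pentagonalPairs p n, Corresponds p z q := by
    rw [mem_filter, mem_halfPlaneReps (by omega)] at hz
    exact ⟨⟨hz.1.1, hz.2⟩, exists_corresponds_of_rep hp hM hz.1.2 hz.2⟩
  choose! side f f_mem hf using corresponds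
  refine (card_nbij f f_mem (fun z hz z' hz' h => ?_) (fun q hq => ?_)).symm
  · exact eq_of_corresponds hp (side z hz).1 (side z' hz').1 (side z hz).2 (hf z hz) (h ▸ hf z' hz')
  · obtain ⟨z, hz, h3, h⟩ := exists_rep_of_mem_pentagonalPairs hp hM hq
    have hz : z ∈ ({z ∈ halfPlaneReps p M | ¬ 3 ∣ z.1 - z.2} : Finset (ℤ × ℤ)) :=
      mem_filter.2 ⟨hz, h3⟩
    exact ⟨z, hz, Prod.ext (by linarith [h.1, (hf z hz).1]) (by linarith [h.2, (hf z hz).2])⟩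

end Representations

section EulerProducts

variable {n : ℕ}

lemma mem_range_pentagonal_iff : n ∈ Set.range pentagonal ↔ IsSquare (24 * n + 1) := by
  constructor
  · rintro ⟨k, rfl⟩
    have h := two_mul_natCast_pentagonal k
    refine isSquare_of_sq_eq (x := 6 * k - 1) ?_
    push_cast
    linear_combination -12 * h
  · rintro ⟨r, hr⟩
    zify at hr
    obtain ⟨k, hk⟩ : ∃ k : ℤ, (6 * k - 1) ^ 2 = r ^ 2 := by
      rcases emod_six_of_sq_emod_six (x := r) (by rw [sq, ← hr]; omega) with h | h
      · exact ⟨-(r / 6), by rw [show 6 * (-((r : ℤ) / 6)) - 1 = -r by omega, neg_sq]⟩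
      · exact ⟨(r + 1) / 6, by rw [show 6 * (((r : ℤ) + 1) / 6) - 1 = r by omega]⟩
    refine ⟨k, ?_⟩
    have h := two_mul_natCast_pentagonal k
    zify
    linarith

local notation "E" => pentagonalSeries (ZMod 2)

lemma coeff_pentagonalSeries_zmod_two :
    coeff n E = if IsSquare (24 * n + 1) then 1 else 0 := by
  split_ifs with h
  · obtain ⟨k, rfl⟩ := mem_range_pentagonal_iff.2 h
    rw [coeff_pentagonalSeries_pentagonal]
    rcases Int.units_eq_one_or k.negOnePow with hk | hk <;> simp [hk]
  · exact coeff_pentagonalSeries_eq_zero _ (mem_range_pentagonal_iff.not.2 h)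

lemma coeff_pentagonalSeries_mul_expand (hp : p = 2 ∨ p = 5)
    (hM : (p + 1) * M = 24 * n + p + 1) [Decidable (∃ r, M = p * r ^ 2)] :
    coeff n (E * expand p (by omega) E) =
      (if IsSquare M then 1 else 0) + if ∃ r, M = p * r ^ 2 then 1 else 0 := by
  rw [← natCast_card_halfPlaneReps hp hM, natCast_card_halfPlaneReps_eq_filter_not_dvd hp hM,
    ← card_pentagonalPairs hp hM, pentagonalPairs, natCast_card_filter, coeff_mul]
  refine sum_congr rfl fun q _ => ?_
  simp only [coeff_expand, coeff_pentagonalSeries_zmod_two, ite_and, ite_mul, one_mul, zero_mul]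

/-- The series `ψ(q) = ∑ q ^ (k * (k + 1) / 2)` modulo 2, a number `n` being triangular if and only
if `8 * n + 1` is a square. -/
noncomputable def triangularSeries : (ZMod 2)⟦X⟧ :=
  .mk fun n => if IsSquare (8 * n + 1) then 1 else 0

local notation "ψ" => triangularSeries

lemma expand_two_eq_sq (f : (ZMod 2)⟦X⟧) : expand 2 two_ne_zero f = f ^ 2 := by
  have := MvPowerSeries.map_frobenius_expand 2 two_ne_zero (f := f)
  rwa [ZMod.frobenius_zmod, MvPowerSeries.map_id] at this

lemma pentagonalSeries_mul_expand_two : E * expand 2 two_ne_zero E = ψ := by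
  classical
  ext n
  have : ¬ ∃ r, 8 * n + 1 = 2 * r ^ 2 := by rintro ⟨r, hr⟩; omega
  rw [coeff_pentagonalSeries_mul_expand (M := 8 * n + 1) (.inl rfl) (by ring), if_neg this,
    add_zero, triangularSeries, coeff_mk]

lemma isSquare_four_mul_add_one_iff :
    IsSquare (4 * n + 1) ↔ 2 ∣ n ∧ IsSquare (8 * (n / 2) + 1) := by
  constructor
  · intro ⟨r, hr⟩
    have odd : Odd (r * r) := hr ▸ ⟨2 * n, by ring⟩
    have := Nat.eight_dvd_sq_sub_one_of_odd (Nat.odd_mul.1 odd).1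
    rw [sq, ← hr] at this
    exact ⟨by omega, r, by omega⟩
  · rintro ⟨⟨k, rfl⟩, h⟩
    rw [Nat.mul_div_cancel_left _ two_pos] at h
    convert h using 1
    ring

lemma exists_four_mul_add_one_eq_iff :
    (∃ r, 4 * (n + 1) + 1 = 5 * r ^ 2) ↔ 10 ∣ n ∧ IsSquare (8 * (n / 10) + 1) := by
  constructor
  · intro ⟨r, hr⟩
    have odd : Odd (5 * r ^ 2) := hr ▸ ⟨2 * (n + 1), by ring⟩
    have := Nat.eight_dvd_sq_sub_one_of_odd (Nat.odd_pow_iff two_ne_zero |>.1 (Nat.odd_mul.1 odd).2)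
    exact ⟨by omega, r, by rw [← sq]; omega⟩
  · rintro ⟨⟨k, rfl⟩, r, h⟩
    rw [Nat.mul_div_cancel_left _ (by norm_num)] at h
    exact ⟨r, by rw [sq, ← h]; ring⟩

lemma pentagonalSeries_mul_expand_five :
    E * expand 5 (by norm_num) E = expand 2 two_ne_zero ψ + X * expand 10 (by norm_num) ψ := by
  classical
  ext n
  rw [coeff_pentagonalSeries_mul_expand (M := 4 * n + 1) (.inr rfl) (by ring), map_add]
  congr 1
  · simp only [isSquare_four_mul_add_one_iff, coeff_expand, triangularSeries, coeff_mk, ite_and]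
  · cases n with
    | zero =>
      rw [coeff_zero_X_mul, if_neg]
      rintro ⟨r, hr⟩
      omega
    | succ n =>
      simp only [exists_four_mul_add_one_eq_iff, coeff_succ_X_mul, coeff_expand, triangularSeries,
        coeff_mk, ite_and]

local notation "E₅" => expand 5 (OfNat.ofNat_ne_zero 5) (pentagonalSeries (ZMod 2))

lemma constantCoeff_pentagonalSeries_zmod_two : constantCoeff E = 1 := by
  simp [← coeff_zero_eq_constantCoeff_apply, coeff_pentagonalSeries_zmod_two]

lemma expand_five_mul_inv : E₅ * E₅⁻¹ = 1 :=
  PowerSeries.mul_inv_cancel _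
    (by simp [constantCoeff_expand, constantCoeff_pentagonalSeries_zmod_two])

lemma regularSeries_two_five_mul : regularSeries (ZMod 2) 2 5 * E₅ = E := by
  have h := regularSeries_mul_pentagonalSeries_mul_expand (l := 2) (m := 5) (ZMod 2)
    two_ne_zero (OfNat.ofNat_ne_zero 5) (by norm_num)
  rw [expand_mul 2 two_ne_zero 5 (OfNat.ofNat_ne_zero 5), expand_two_eq_sq, expand_two_eq_sq] at h
  have ne_zero : E * E₅ ≠ 0 := fun h => by
    simpa [constantCoeff_pentagonalSeries_zmod_two] using congrArg constantCoeff h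
  exact mul_right_cancel₀ ne_zero (by linear_combination h)

lemma regularSeries_two_five_dissection :
    regularSeries (ZMod 2) 2 5 =
      expand 2 two_ne_zero (ψ * E₅⁻¹) + X * expand 2 two_ne_zero (E₅ ^ 2) := by
  have hψ : expand 10 (by norm_num) ψ = (E₅ ^ 2 * E₅) ^ 2 := by
    rw [← pentagonalSeries_mul_expand_two, expand_mul 2 two_ne_zero 5 (by norm_num),
      expand_two_eq_sq, expand_two_eq_sq, map_mul, map_pow, mul_comm]
  have hE := pentagonalSeries_mul_expand_five
  have hA := regularSeries_two_five_mul
  have inv := expand_five_mul_inv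
  rw [hψ, expand_two_eq_sq] at hE
  rw [expand_two_eq_sq, expand_two_eq_sq]
  set F := E₅
  linear_combination F⁻¹ ^ 2 * hE + F * F⁻¹ ^ 2 * hA +
    (X * F ^ 4 - regularSeries (ZMod 2) 2 5) * (F * F⁻¹ + 1) * inv

lemma four_dvd_coloredRegular (h : coeff n (ψ * E₅) = 0) :
    4 ∣ coloredRegular 2 2 5 (2 * n + 1) := by
  have reduce : map (Int.castRingHom (ZMod 2)) (regularSeries ℤ 2 5) =
      regularSeries (ZMod 2) 2 5 := by
    ext k
    simp [regularSeries]
  zify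
  rw [← coeff_regularSeries_pow]
  refine four_dvd_coeff_sq (reduce.trans regularSeries_two_five_dissection) n ?_
  rwa [pow_two, mul_mul_mul_comm, mul_comm E₅⁻¹, expand_five_mul_inv, mul_one]

lemma coeff_triangularSeries_mul_expand_five_eq_zero
    (h : ∀ x y : ℤ, 3 * x ^ 2 + 5 * y ^ 2 ≠ 24 * n + 8) :
    coeff n (ψ * E₅) = 0 := by
  rw [coeff_mul]
  refine sum_eq_zero fun q hq => ?_
  rw [coeff_expand, triangularSeries, coeff_mk, coeff_pentagonalSeries_zmod_two]
  simp only [ite_mul, one_mul, zero_mul, ite_eq_right_iff, one_ne_zero, imp_false]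
  intro hi hdvd hk
  obtain ⟨x, hx⟩ := hi
  obtain ⟨y, hy⟩ := hk
  refine h x y ?_
  rw [HasAntidiagonal.mem_antidiagonal] at hq
  zify at hx hy hq
  have := Nat.mul_div_cancel' hdvd
  zify at this
  linear_combination -3 * hx - 5 * hy + 24 * hq + 24 * this

end EulerProducts

lemma exists_three_mul_sq_add_five_mul_sq_eq {x y W : ℤ} (h : 3 * x ^ 2 + 5 * y ^ 2 = 25 * W) :
    ∃ x' y' : ℤ, 3 * x' ^ 2 + 5 * y' ^ 2 = W := by
  have prime : Prime (5 : ℤ) := by norm_num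
  obtain ⟨x', rfl⟩ : 5 ∣ x := prime.dvd_of_dvd_pow (n := 2) (by omega)
  obtain ⟨y', rfl⟩ : 5 ∣ y := prime.dvd_of_dvd_pow (n := 2) (by ring_nf at h ⊢; omega)
  exact ⟨x', y', by linarith⟩

lemma three_mul_sq_add_five_mul_sq_ne (j : ℕ) {K : ℤ} (hK : K % 5 = 2 ∨ K % 5 = 3) (x y : ℤ) :
    3 * x ^ 2 + 5 * y ^ 2 ≠ 5 ^ (2 * j + 1) * K := by
  induction j generalizing x y with
  | zero =>
    intro h
    obtain ⟨z, rfl⟩ : 5 ∣ x := (by norm_num : Prime (5 : ℤ)).dvd_of_dvd_pow (n := 2) (by omega)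
    have hy : y ^ 2 = K - 15 * z ^ 2 := by
      simp only [mul_zero, zero_add, pow_one] at h
      linarith
    have : y ^ 2 % 5 = 0 ∨ y ^ 2 % 5 = 1 ∨ y ^ 2 % 5 = 4 := by
      have : y % 5 = 0 ∨ y % 5 = 1 ∨ y % 5 = 2 ∨ y % 5 = 3 ∨ y % 5 = 4 := by omega
      rcases this with h | h | h | h | h <;> simp [pow_two, Int.mul_emod, h]
    omega
  | succ j ih =>
    intro h
    obtain ⟨x', y', h'⟩ := exists_three_mul_sq_add_five_mul_sq_eq
      (W := 5 ^ (2 * j + 1) * K) (h.trans (by ring))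
    exact ih x' y' h'

lemma exists_index_eq_two_mul_add_one (j n : ℕ) {t : ℕ} (ht : t = 22 ∨ t = 28) :
    ∃ N : ℕ, 2 * 5 ^ (2 * j + 2) * n + (t * 5 ^ (2 * j + 1) + 1) / 3 = 2 * N + 1 ∧
      (24 * N + 8 : ℤ) = 5 ^ (2 * j + 1) * (4 * (30 * n + t)) := by
  have hmod : 5 ^ (2 * j + 1) % 6 = 5 := by
    rw [pow_succ, pow_mul, Nat.mul_mod, Nat.pow_mod]
    norm_num
  rw [show 2 * 5 ^ (2 * j + 2) * n = 10 * (5 ^ (2 * j + 1) * n) by ring]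
  generalize hP : 5 ^ (2 * j + 1) = P at *
  have hP' : (5 : ℤ) ^ (2 * j + 1) = P := by exact_mod_cast hP
  rw [hP', show (P : ℤ) * (4 * (30 * n + t)) = 120 * (P * n : ℕ) + 4 * (t * P : ℕ) by
    push_cast; ring]
  refine ⟨(10 * (P * n) + (t * P + 1) / 3) / 2, ?_⟩
  rcases ht with rfl | rfl <;> omega

end RegularPartition

theorem stmt_14 (j n : ℕ) (t : ℕ) (ht : t ∈ ({22, 28} : Finset ℕ)) :
    coloredRegular 2 2 5 (2 * 5 ^ (2 * j + 2) * n + (t * 5 ^ (2 * j + 1) + 1) / 3)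
      ≡ 0 [MOD 4] := by
  have ht : t = 22 ∨ t = 28 := by simpa using ht
  obtain ⟨N, index_eq, form_eq⟩ := RegularPartition.exists_index_eq_two_mul_add_one j n ht
  rw [index_eq, Nat.modEq_zero_iff_dvd]
  refine RegularPartition.four_dvd_coloredRegular
    (RegularPartition.coeff_triangularSeries_mul_expand_five_eq_zero fun x y => ?_)
  rw [form_eq]
  exact RegularPartition.three_mul_sq_add_five_mul_sq_ne j (by omega) x y
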